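/- arXiv:2301.07222 — 2 statements merged into one kernel-verified Lean document; each statement's English description precedes it below -/
import Mathlib

section
/- Every lower Christoffel word is strictly less in lexicographic order than another lower Christoffel word if and only if its slope is strictly smaller; i.e., for lower Christoffel words u, v over {a < b}, u <_lex v iff |u|_b/|u|_a < |v|_b/|v|_a (as elements of ℚ ∪ {∞}). -/
variable {α : Type*}

/-- The list of all cyclic rotations of a word. -/
def rotations (w : List α) : List (List α) :=
  (List.range w.length).map (fun i => w.rotate i)

/-- The Burrows–Wheeler transform: last letters of the lexicographically
sorted list of rotations. -/
def BWT [LinearOrder α] (w : List α) : List α :=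
  (List.insertionSort (· ≤ ·) (rotations w)).filterMap List.getLast?

/-- A word is primitive if it is nonempty and not a proper power. -/
def IsPrimitiveWord (w : List α) : Prop :=
  w ≠ [] ∧ ∀ (u : List α) (k : ℕ), w = (List.replicate k u).flatten → k = 1

/-- A primitive word is perfectly clustering if its Burrows–Wheeler
transform is weakly decreasing. -/
def PerfectlyClustering [LinearOrder α] (w : List α) : Prop :=
  IsPrimitiveWord w ∧ List.Chain' (· ≥ ·) (BWT w)

/-- Slope of a word over `{a < b} = {false < true}`: number of `b`'s over
number of `a`'s, in `ℚ ∪ {∞}`. -/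
def wordSlope (w : List Bool) : WithTop ℚ :=
  if w.count false = 0 then ⊤
  else (((w.count true : ℚ) / (w.count false : ℚ) : ℚ) : WithTop ℚ)

/-- A Lyndon word: the lexicographically smallest element of its conjugacy class. -/
def IsLyndonWord [LinearOrder β] (w : List β) : Prop :=
  w ≠ [] ∧ ∀ k, w ≤ w.rotate k

/-- A lower Christoffel word: a perfectly clustering word that is Lyndon. -/
def LowerChristoffel (w : List Bool) : Prop :=
  PerfectlyClustering w ∧ IsLyndonWord w

/-!
Let `w` be a perfectly clustering Lyndon word of length `n` with `q` letters `b`, and rank its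
rotations lexicographically. Clustering forces one further rotation step to add `q` to the rank
after reading an `a` and to subtract `n - q` after reading a `b`. The rank starts at `0`
since `w` is Lyndon, so the rotation by `k` has rank `k * q` modulo `n`, and the prefix of length
`k` contains exactly `⌊k * q / n⌋` letters `b`. So `w` is the discretization of a line whose
direction is given by its slope, and a steeper line gives a lexicographically larger word. Equal
slopes give equal words, because primitivity forces `n` and `q` to be coprime.
-/

section Words

lemma eq_flatten_replicate_of_append_comm {p s : List α} {d : ℕ} (hcomm : p ++ s = s ++ p)
    (hlen : s.length = d * p.length) : s = (List.replicate d p).flatten := by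
  induction d generalizing s with
  | zero => simpa using hlen
  | succ d ih =>
    rw [Nat.succ_mul] at hlen
    obtain ⟨t, rfl⟩ : p <+: s :=
      List.prefix_of_prefix_length_le ⟨s, hcomm⟩ (List.prefix_append s p) (by omega)
    rw [List.append_assoc, List.append_cancel_left_eq] at hcomm
    rw [List.length_append] at hlen
    rw [List.replicate_succ, List.flatten_cons, ← ih hcomm (by omega)]

lemma IsPrimitiveWord.eq_one_of_rotate_eq {w : List α} {d m : ℕ} (hw : IsPrimitiveWord w)
    (hlen : w.length = d * m) (hrot : w.rotate m = w) : d = 1 := by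
  have hd : 0 < d := Nat.pos_of_mul_pos_right (hlen ▸ List.length_pos_iff.2 hw.1)
  have hm : m ≤ w.length := hlen ▸ Nat.le_mul_of_pos_left m hd
  have hcomm : w.take m ++ w = w ++ w.take m :=
    calc w.take m ++ w = w.take m ++ w.rotate m := by rw [hrot]
      _ = w ++ w.take m := by
        rw [List.rotate_eq_drop_append_take hm, ← List.append_assoc, List.take_append_drop]
  have hpow : w = (List.replicate d (w.take m)).flatten :=
    eq_flatten_replicate_of_append_comm hcomm (by rw [List.length_take_of_le hm, hlen])
  exact hw.2 (w.take m) d hpow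

lemma countP_eq_sum_getElem (w : List α) (p : α → Bool) :
    w.countP p = ∑ j : Fin w.length, if p w[j] then 1 else 0 := by
  induction w with
  | nil => rfl
  | cons a w ih =>
    rw [List.countP_cons, ih, add_comm]
    exact (Fin.sum_univ_succ fun j : Fin (w.length + 1) => if p (a :: w)[j] then 1 else 0).symm

lemma append_lt_append_right_iff [LinearOrder α] {s t : List α} (r : List α)
    (hlen : s.length = t.length) : s ++ r < t ++ r ↔ s < t := by
  induction s generalizing t with
  | nil =>
    rw [List.eq_nil_of_length_eq_zero hlen.symm]
    exact iff_of_false (lt_irrefl _) (lt_irrefl _)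
  | cons a s ih =>
    obtain ⟨b, t, rfl⟩ := List.exists_cons_of_length_eq_add_one hlen.symm
    rw [List.cons_append, List.cons_append, List.cons_lt_cons_iff, List.cons_lt_cons_iff,
      ih (Nat.succ.inj hlen)]

lemma rel_of_lt_of_pairwise [Preorder α] {R : α → α → Prop} {l : List α} {a b : α}
    (hle : l.Pairwise (· ≤ ·)) (hR : l.Pairwise R) (ha : a ∈ l) (hb : b ∈ l) (hab : a < b) :
    R a b := by
  let S (x y : α) : Prop := (x < y → R x y) ∧ (y < x → R y x)
  have : Std.Symm S := ⟨fun _ _ h => h.symm⟩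
  have hS : l.Pairwise S :=
    (hle.and hR).imp fun ⟨hxy, hRxy⟩ => ⟨fun _ => hRxy, fun hyx => (hxy.not_gt hyx).elim⟩
  exact (hS.forall ha hb hab.ne).1 hab

end Words

section Rotations

lemma rotate_eq_getElem_cons {w : List α} {k : ℕ} (hk : k < w.length) :
    w.rotate k = w[k] :: (w.drop (k + 1) ++ w.take k) := by
  rw [List.rotate_eq_drop_append_take hk.le, List.drop_eq_getElem_cons hk, List.cons_append]

lemma rotate_succ_eq_append_getElem {w : List α} {k : ℕ} (hk : k < w.length) :
    w.rotate (k + 1) = w.drop (k + 1) ++ w.take k ++ [w[k]] := by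
  rw [List.rotate_eq_drop_append_take hk, List.append_assoc, List.take_append_getElem]

lemma getLast?_rotate_succ {w : List α} {k : ℕ} (hk : k < w.length) :
    (w.rotate (k + 1)).getLast? = some w[k] := by
  rw [rotate_succ_eq_append_getElem hk, List.getLast?_concat]

lemma rotate_mem_rotations {w : List α} (hw : w ≠ []) (k : ℕ) : w.rotate k ∈ rotations w :=
  List.mem_map.2 ⟨k % w.length, List.mem_range.2 (Nat.mod_lt _ (List.length_pos_iff.2 hw)),
    List.rotate_mod w k⟩

variable [LinearOrder α] {w : List α} {j k : ℕ}

lemma rotate_lt_rotate_of_getElem_lt (hj : j < w.length) (hk : k < w.length) (h : w[j] < w[k]) :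
    w.rotate j < w.rotate k := by
  rw [rotate_eq_getElem_cons hj, rotate_eq_getElem_cons hk]
  exact List.cons_lt_cons_iff.2 (.inl h)

lemma rotate_succ_lt_rotate_succ_iff_of_getElem_eq (hj : j < w.length) (hk : k < w.length)
    (h : w[j] = w[k]) : w.rotate (j + 1) < w.rotate (k + 1) ↔ w.rotate j < w.rotate k := by
  have hlen : (w.drop (j + 1) ++ w.take j).length = (w.drop (k + 1) ++ w.take k).length := by
    simp only [List.length_append, List.length_drop, List.length_take]
    omega
  rw [rotate_succ_eq_append_getElem hj, rotate_succ_eq_append_getElem hk,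
    rotate_eq_getElem_cons hj, rotate_eq_getElem_cons hk, h, append_lt_append_right_iff _ hlen,
    List.cons_lt_cons_self]

lemma rotate_succ_lt_rotate_succ_of_getElem_lt (hw : (BWT w).Pairwise (· ≥ ·))
    (hj : j < w.length) (hk : k < w.length) (h : w[j] < w[k]) :
    w.rotate (k + 1) < w.rotate (j + 1) := by
  have hnil : w ≠ [] := List.ne_nil_of_length_pos (Nat.zero_lt_of_lt hj)
  have hmem (i : ℕ) : w.rotate i ∈ List.insertionSort (· ≤ ·) (rotations w) :=
    (List.mem_insertionSort _).2 (rotate_mem_rotations hnil i)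
  have hne : w.rotate (k + 1) ≠ w.rotate (j + 1) := fun heq => h.ne' <| Option.some.inj <| by
    rw [← getLast?_rotate_succ hk, heq, getLast?_rotate_succ hj]
  refine hne.lt_of_le (not_lt.1 fun hgt => h.not_ge ?_)
  exact rel_of_lt_of_pairwise (List.pairwise_insertionSort (· ≤ ·) (rotations w))
    (List.pairwise_filterMap.1 hw) (hmem (j + 1)) (hmem (k + 1)) hgt
    w[j] (getLast?_rotate_succ hj) w[k] (getLast?_rotate_succ hk)

end Rotations

section RotationRank

/-- The lexicographic rank of the `k`-th rotation of `w`: the number of indices `j < |w|` whose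
rotation is strictly smaller. -/
def rotationRank [LinearOrder α] (w : List α) (k : ℕ) : ℕ :=
  Nat.count (fun j => w.rotate j < w.rotate k) w.length

variable [LinearOrder α] {w : List α} {k : ℕ}

lemma rotationRank_eq_sum (w : List α) (k : ℕ) :
    rotationRank w k = ∑ j : Fin w.length, if w.rotate j < w.rotate k then 1 else 0 := by
  rw [rotationRank, Nat.count_eq_card_filter_range, Finset.card_filter, Finset.sum_range]

lemma rotationRank_eq_sum_succ (w : List α) (k : ℕ) :
    rotationRank w k = ∑ j : Fin w.length, if w.rotate (j + 1) < w.rotate k then 1 else 0 := by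
  have hperiod := Nat.count_succ' (fun j => w.rotate j < w.rotate k) w.length
  rw [Nat.count_succ, List.rotate_length, List.rotate_zero, Nat.add_right_cancel_iff] at hperiod
  rw [rotationRank, hperiod, Nat.count_eq_card_filter_range, Finset.card_filter, Finset.sum_range]

lemma rotationRank_lt_length (hw : w ≠ []) (k : ℕ) : rotationRank w k < w.length := by
  refine (Nat.count_le _).lt_of_ne fun hall => ?_
  have hlt := Nat.count_iff_forall.1 hall (k % w.length) (Nat.mod_lt _ (List.length_pos_iff.2 hw))
  rw [List.rotate_mod] at hlt
  exact lt_irrefl _ hlt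

lemma rotationRank_eq_zero_iff : rotationRank w k = 0 ↔ ∀ j, w.rotate k ≤ w.rotate j := by
  rcases eq_or_ne w [] with rfl | hw
  · simp [rotationRank]
  simp only [rotationRank, Nat.count_iff_forall_not, not_lt]
  refine ⟨fun h j => ?_, fun h j _ => h j⟩
  rw [← List.rotate_mod w j]
  exact h _ (Nat.mod_lt _ (List.length_pos_iff.2 hw))

lemma IsLyndonWord.rotationRank_zero (hw : IsLyndonWord w) : rotationRank w 0 = 0 :=
  rotationRank_eq_zero_iff.2 fun j => by simpa only [List.rotate_zero] using hw.2 j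

lemma rotationRank_succ (hw : (BWT w).Pairwise (· ≥ ·)) (hk : k < w.length) :
    rotationRank w (k + 1) + w.countP (· < w[k]) = rotationRank w k + w.countP (w[k] < ·) := by
  rw [rotationRank_eq_sum_succ, rotationRank_eq_sum, countP_eq_sum_getElem, countP_eq_sum_getElem,
    ← Finset.sum_add_distrib, ← Finset.sum_add_distrib]
  refine Finset.sum_congr rfl fun ⟨j, hj⟩ _ => ?_
  rcases lt_trichotomy w[j] w[k] with h | h | h
  · have hlt := rotate_lt_rotate_of_getElem_lt hj hk h
    have hgt := rotate_succ_lt_rotate_succ_of_getElem_lt hw hj hk h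
    simp [hlt, hgt.not_gt, h, h.not_gt]
  · simp [rotate_succ_lt_rotate_succ_iff_of_getElem_eq hj hk h, h]
  · have hgt := rotate_lt_rotate_of_getElem_lt hk hj h
    have hlt := rotate_succ_lt_rotate_succ_of_getElem_lt hw hk hj h
    simp [hlt, hgt.not_gt, h, h.not_gt]

end RotationRank

section BinaryWords

variable {u v w : List Bool} {k : ℕ}

lemma rotationRank_succ_of_getElem_eq_false (hw : (BWT w).Pairwise (· ≥ ·)) (hk : k < w.length)
    (hletter : w[k] = false) : rotationRank w (k + 1) = rotationRank w k + w.count true := by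
  have hbelow : w.countP (· < false) = 0 := by simp
  have habove : w.countP (false < ·) = w.count true := List.countP_congr (by simp)
  simpa only [hletter, hbelow, habove, add_zero] using rotationRank_succ hw hk

lemma rotationRank_succ_of_getElem_eq_true (hw : (BWT w).Pairwise (· ≥ ·)) (hk : k < w.length)
    (hletter : w[k] = true) : rotationRank w (k + 1) + w.count false = rotationRank w k := by
  have hbelow : w.countP (· < true) = w.count false := List.countP_congr (by simp)
  have habove : w.countP (true < ·) = 0 := by simp
  simpa only [hletter, hbelow, habove, add_zero] using rotationRank_succ hw hk

lemma rotationRank_add_length_mul_count_take (hw : (BWT w).Pairwise (· ≥ ·)) (hk : k ≤ w.length) :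
    rotationRank w k + w.length * (w.take k).count true
      = rotationRank w 0 + k * w.count true := by
  induction k with
  | zero => simp
  | succ k ih =>
    have hprev := ih (Nat.le_of_succ_le hk)
    have hlen := List.count_false_add_count_true w
    rw [← List.take_append_getElem hk, List.count_append, add_one_mul]
    cases hletter : w[k] with
    | false =>
      have hstep := rotationRank_succ_of_getElem_eq_false hw hk hletter
      rw [List.count_cons_of_ne Bool.false_ne_true, List.count_nil, add_zero]
      omega
    | true =>
      have hstep := rotationRank_succ_of_getElem_eq_true hw hk hletter
      rw [List.count_singleton_self, mul_add_one]
      omega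

lemma rotationRank_eq_mod (hw : (BWT w).Pairwise (· ≥ ·)) (hlyndon : IsLyndonWord w)
    (hk : k ≤ w.length) : rotationRank w k = k * w.count true % w.length := by
  have hformula := rotationRank_add_length_mul_count_take hw hk
  rw [hlyndon.rotationRank_zero, zero_add] at hformula
  rw [← hformula, Nat.add_mul_mod_self_left,
    Nat.mod_eq_of_lt (rotationRank_lt_length hlyndon.1 k)]

lemma count_true_take_eq_div (hw : (BWT w).Pairwise (· ≥ ·)) (hlyndon : IsLyndonWord w)
    (hk : k ≤ w.length) : (w.take k).count true = k * w.count true / w.length := by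
  have hformula := rotationRank_add_length_mul_count_take hw hk
  rw [hlyndon.rotationRank_zero, zero_add] at hformula
  rw [← hformula, Nat.add_mul_div_left _ _ (List.length_pos_iff.2 hlyndon.1),
    Nat.div_eq_of_lt (rotationRank_lt_length hlyndon.1 k), zero_add]

lemma le_or_prefix_of_count_take_le
    (h : ∀ k, k ≤ u.length → k ≤ v.length → (u.take k).count true ≤ (v.take k).count true) :
    u ≤ v ∨ v <+: u := by
  by_contra! hcon
  obtain ⟨hlt, hprefix⟩ := hcon
  rcases List.lt_iff_exists.1 hlt with ⟨htake, -⟩ | ⟨i, hv, hu, hagree, hletter⟩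
  · exact hprefix (List.prefix_iff_eq_take.2 htake)
  · have htake : u.take i = v.take i := List.ext_getElem (by grind) (by grind)
    have hcount := h (i + 1) hu hv
    obtain ⟨hfalse, htrue⟩ := Bool.lt_iff.1 hletter
    rw [← List.take_append_getElem hu, ← List.take_append_getElem hv, htake, hfalse,
      htrue] at hcount
    simp at hcount

lemma wordSlope_lt_wordSlope_iff (hv : v ≠ []) :
    wordSlope u < wordSlope v ↔ u.count true * v.length < v.count true * u.length := by
  have hu_length := List.count_false_add_count_true u
  have hv_length := List.count_false_add_count_true v
  have hvpos : 0 < v.length := List.length_pos_iff.2 hv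
  have hcross : u.count true * v.length < v.count true * u.length ↔
      u.count true * v.count false < v.count true * u.count false := by
    rw [← hu_length, ← hv_length, mul_add, mul_add, mul_comm (v.count true) (u.count true),
      Nat.add_lt_add_iff_right]
  rw [hcross, wordSlope, wordSlope]
  split_ifs with hu0 hv0 hv0
  · simp only [lt_self_iff_false, hu0, hv0, mul_zero]
  · simp only [not_top_lt, hu0, mul_zero, not_lt_zero]
  · simp only [WithTop.coe_lt_top, hv0, mul_zero, true_iff]
    exact Nat.mul_pos (by omega) (by omega)
  · rw [WithTop.coe_lt_coe, div_lt_div_iff₀ (by positivity) (by positivity)]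
    norm_cast

end BinaryWords

section LowerChristoffel

variable {u v w : List Bool}

lemma le_or_prefix_of_count_mul_length_le (hu : (BWT u).Pairwise (· ≥ ·))
    (hu_lyndon : IsLyndonWord u) (hv : (BWT v).Pairwise (· ≥ ·)) (hv_lyndon : IsLyndonWord v)
    (h : u.count true * v.length ≤ v.count true * u.length) : u ≤ v ∨ v <+: u := by
  have hupos : 0 < u.length := List.length_pos_iff.2 hu_lyndon.1
  have hvpos : 0 < v.length := List.length_pos_iff.2 hv_lyndon.1
  refine le_or_prefix_of_count_take_le fun k hku hkv => ?_
  rw [count_true_take_eq_div hu hu_lyndon hku, count_true_take_eq_div hv hv_lyndon hkv]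
  calc k * u.count true / u.length
      = k * (u.count true * v.length) / (u.length * v.length) := by
        rw [← mul_assoc, Nat.mul_div_mul_right _ _ hvpos]
    _ ≤ k * (v.count true * u.length) / (v.length * u.length) := by
        rw [mul_comm v.length]
        gcongr
    _ = k * v.count true / v.length := by rw [← mul_assoc, Nat.mul_div_mul_right _ _ hupos]

lemma lt_of_count_mul_length_lt (hu : (BWT u).Pairwise (· ≥ ·)) (hu_lyndon : IsLyndonWord u)
    (hv : (BWT v).Pairwise (· ≥ ·)) (hv_lyndon : IsLyndonWord v)
    (h : u.count true * v.length < v.count true * u.length) : u < v := by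
  rcases le_or_prefix_of_count_mul_length_le hu hu_lyndon hv hv_lyndon h.le with hle | hprefix
  · exact hle.lt_of_ne fun heq => h.ne (by rw [heq])
  · have hcount := count_true_take_eq_div hu hu_lyndon hprefix.length_le
    rw [← List.prefix_iff_eq_take.1 hprefix] at hcount
    have hfloor := Nat.div_mul_le_self (v.length * u.count true) u.length
    rw [← hcount, mul_comm v.length] at hfloor
    exact absurd h hfloor.not_gt

lemma LowerChristoffel.pairwise_BWT (hw : LowerChristoffel w) : (BWT w).Pairwise (· ≥ ·) :=
  List.isChain_iff_pairwise.1 hw.1.2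

lemma LowerChristoffel.coprime_length_count (hw : LowerChristoffel w) :
    w.length.Coprime (w.count true) := by
  obtain ⟨m, hm⟩ := Nat.gcd_dvd_left w.length (w.count true)
  obtain ⟨r, hr⟩ := Nat.gcd_dvd_right w.length (w.count true)
  have hlen : 0 < w.length := List.length_pos_iff.2 hw.2.1
  have hmle : m ≤ w.length := hm ▸ Nat.le_mul_of_pos_left m (Nat.gcd_pos_of_pos_left _ hlen)
  have hrank : rotationRank w m = 0 := by
    rw [rotationRank_eq_mod hw.pairwise_BWT hw.2 hmle]
    refine Nat.mod_eq_zero_of_dvd ⟨r, ?_⟩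
    calc m * w.count true = m * (w.length.gcd (w.count true) * r) := by rw [← hr]
      _ = w.length.gcd (w.count true) * m * r := by ring
      _ = w.length * r := by rw [← hm]
  have hrot : w.rotate m = w := by
    refine le_antisymm ?_ (hw.2.2 m)
    simpa only [List.rotate_zero] using rotationRank_eq_zero_iff.1 hrank 0
  exact hw.1.1.eq_one_of_rotate_eq hm hrot

lemma LowerChristoffel.eq_of_count_mul_length_eq (hu : LowerChristoffel u)
    (hv : LowerChristoffel v) (h : u.count true * v.length = v.count true * u.length) :
    u = v := by
  have hlen : u.length = v.length := Nat.dvd_antisymm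
    (hu.coprime_length_count.dvd_of_dvd_mul_left (h ▸ Nat.dvd_mul_left _ _))
    (hv.coprime_length_count.dvd_of_dvd_mul_left (h ▸ Nat.dvd_mul_left _ _))
  rcases le_or_prefix_of_count_mul_length_le hu.pairwise_BWT hu.2 hv.pairwise_BWT hv.2 h.le
    with huv | hprefix
  · rcases le_or_prefix_of_count_mul_length_le hv.pairwise_BWT hv.2 hu.pairwise_BWT hu.2 h.ge
      with hvu | hprefix
    · exact huv.antisymm hvu
    · exact hprefix.eq_of_length hlen
  · exact (hprefix.eq_of_length hlen.symm).symm

end LowerChristoffel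

theorem stmt3 (u v : List Bool) (hu : LowerChristoffel u) (hv : LowerChristoffel v) :
    u < v ↔ wordSlope u < wordSlope v := by
  rw [wordSlope_lt_wordSlope_iff hv.2.1]
  rcases lt_trichotomy (u.count true * v.length) (v.count true * u.length) with hlt | heq | hgt
  · have huv := lt_of_count_mul_length_lt hu.pairwise_BWT hu.2 hv.pairwise_BWT hv.2 hlt
    exact iff_of_true huv hlt
  · obtain rfl := hu.eq_of_count_mul_length_eq hv heq
    exact iff_of_false (lt_irrefl _) heq.not_lt
  · have hvu := lt_of_count_mul_length_lt hv.pairwise_BWT hv.2 hu.pairwise_BWT hu.2 hgt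
    exact iff_of_false hvu.not_gt hgt.not_gt
end

section
/- The Gessel–Reutenauer map Φ, sending a word w over a totally ordered alphabet to the multiset of primitive necklaces formed from the cycles of the inverse of the standard permutation of w, is a bijection between words of length n and multisets of primitive necklaces with n total letters. -/
variable {α : Type*}

/-- Positions of the word sorted by letter (ties broken by position),
i.e. the list whose `r`-th entry is the position of rank `r`. -/
def sortedPositions [LinearOrder α] (w : List α) : List (Fin w.length) :=
  List.insertionSort (fun i j => toLex (w.get i, (i:ℕ)) ≤ toLex (w.get j, (j:ℕ)))
    (List.finRange w.length)

theorem length_sortedPositions [LinearOrder α] (w : List α) :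
    (sortedPositions w).length = w.length := by
  simp [sortedPositions]

/-- The inverse of the standard permutation of `w`: `tau w r` is the position
of the letter of rank `r`. -/
def tau [LinearOrder α] (w : List α) : Fin w.length → Fin w.length :=
  fun r => (sortedPositions w).get (Fin.cast (length_sortedPositions w).symm r)

/-- The word read along the cycle of `tau w` through position `j`. -/
noncomputable def cycleWord [LinearOrder α] (w : List α) (j : Fin w.length) : List α :=
  (List.range (Function.minimalPeriod (tau w) j)).map (fun t => w.get ((tau w)^[t] j))

/-- A necklace is a conjugacy (rotation) class of words. -/
def Necklace (α : Type*) := Quotient (List.IsRotated.setoid α)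

def Necklace.mk (w : List α) : Necklace α := Quotient.mk (List.IsRotated.setoid α) w

/-- The length of a necklace. -/
def Necklace.length : Necklace α → ℕ :=
  Quotient.lift List.length (fun a b h => by
    obtain ⟨k, hk⟩ := h
    rw [← hk, List.length_rotate])

/-- A necklace is primitive if it is the class of a primitive word. -/
def Necklace.IsPrimitive (x : Necklace α) : Prop :=
  ∃ w : List α, Necklace.mk w = x ∧ IsPrimitiveWord w

/-- The Gessel–Reutenauer map: the multiset of necklaces obtained from the
cycles of the inverse of the standard permutation of `w` (one necklace per
cycle, read from the minimal position of the cycle). -/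
noncomputable def Phi [LinearOrder α] (w : List α) : Multiset (Necklace α) :=
  ((Finset.univ.filter (fun j : Fin w.length =>
      ∀ t < w.length, (j : ℕ) ≤ (((tau w)^[t] j : Fin w.length) : ℕ))).val).map
    (fun j => Necklace.mk (cycleWord w j))

/-!
Attach to each position `j` of `w` the cycle of `τ = st(w)⁻¹` through `j`, read from `j`. This word
is primitive: a rotation fixing it moves the points of the cycle along `τ` without changing the
infinite word read from them, and `τ` preserves the order of positions from which the same infinite
word is read, so it induces a strictly increasing self-map of a finite chain, which is the identity.

As `j` runs over the positions of `w`, these words run over the primitive words representing the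
necklaces in `Φ(w)`, with multiplicity, and they do so in increasing order when primitive words are
compared through the infinite periodic words read from their second letter. Since the word attached
to `j` begins with the letter `w_j`, sorting the representatives of `Φ(w)` and taking first letters
recovers `w`.

Conversely, apply this recipe to any multiset `M` of primitive necklaces to get a word `w`, and let
`u_j` be the `j`-th representative. The sequences `j ↦ u_{τ(j)}` and `j ↦` (`u_j` rotated by one
letter) are both increasing for the order comparing first letters and then words, and they have the
same values with multiplicity, since the representatives of `M` are permuted by rotation. Hence they
agree, so `u_j` is the word read along the cycle of `τ` through `j`, and `Φ(w) = M`.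
-/

open Function

namespace GesselReutenauer

section PrimitiveWords

theorem iterate_rotate_one (v : List α) (d : ℕ) :
    (fun l : List α => l.rotate 1)^[d] v = v.rotate d := by
  induction d with
  | zero => simp
  | succ d ih => rw [iterate_succ_apply', ih, List.rotate_rotate]

theorem isPeriodicPt_rotate_one {v : List α} {d : ℕ} :
    IsPeriodicPt (fun l : List α => l.rotate 1) d v ↔ v.rotate d = v := by
  rw [IsPeriodicPt, IsFixedPt, iterate_rotate_one]

theorem eq_flatten_replicate_of_append_comm {u : List α} {k : ℕ} :
    ∀ {v : List α}, v.length = k * u.length → v ++ u = u ++ v →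
      v = (List.replicate k u).flatten := by
  induction k with
  | zero => simp
  | succ k ih =>
    intro v hlen hcomm
    have hprefix : u <+: v := by
      refine List.prefix_of_prefix_length_le (hcomm ▸ List.prefix_append u v)
        (List.prefix_append v u) ?_
      rw [hlen]
      exact Nat.le_mul_of_pos_left _ k.succ_pos
    obtain ⟨t, rfl⟩ := hprefix
    rw [List.append_assoc, List.append_cancel_left_eq] at hcomm
    rw [List.length_append, Nat.succ_mul, add_comm, Nat.add_right_cancel_iff] at hlen
    rw [List.replicate_succ, List.flatten_cons, ← ih hlen hcomm]

theorem eq_flatten_replicate_of_rotate_eq {v : List α} {d k : ℕ} (hrot : v.rotate d = v)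
    (hd : d ≤ v.length) (hlen : v.length = k * d) :
    v = (List.replicate k (v.take d)).flatten := by
  refine eq_flatten_replicate_of_append_comm (by rw [List.length_take_of_le hd, hlen]) ?_
  rw [List.rotate_eq_drop_append_take hd] at hrot
  calc v ++ v.take d = v.take d ++ (v.drop d ++ v.take d) := by
        rw [← List.append_assoc, List.take_append_drop]
    _ = v.take d ++ v := by rw [hrot]

theorem rotate_length_flatten_replicate (u : List α) (k : ℕ) :
    (List.replicate k u).flatten.rotate u.length = (List.replicate k u).flatten := by
  cases k with
  | zero => simp
  | succ k =>
    rw [List.replicate_succ, List.flatten_cons, List.rotate_append_length_eq,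
      ← List.flatten_concat, ← List.replicate_succ', List.replicate_succ, List.flatten_cons]

theorem isPrimitiveWord_iff_minimalPeriod {v : List α} :
    IsPrimitiveWord v ↔ minimalPeriod (fun l : List α => l.rotate 1) v = v.length := by
  have hdvd : minimalPeriod (fun l : List α => l.rotate 1) v ∣ v.length :=
    (isPeriodicPt_rotate_one.2 v.rotate_length).minimalPeriod_dvd
  constructor
  · rintro ⟨hne, hpow⟩
    obtain ⟨k, hk⟩ := hdvd
    have hpower := eq_flatten_replicate_of_rotate_eq
      (isPeriodicPt_rotate_one.1 (isPeriodicPt_minimalPeriod _ v))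
      (Nat.le_of_dvd (List.length_pos_iff.2 hne) ⟨k, hk⟩) (hk.trans (mul_comm _ _))
    rw [hk, hpow _ _ hpower, mul_one]
  · intro hper
    have hne : v ≠ [] := by
      rintro rfl
      have hfix : IsFixedPt (fun l : List α => l.rotate 1) [] := List.rotate_nil 1
      exact one_ne_zero ((minimalPeriod_eq_one_iff_isFixedPt.2 hfix).symm.trans hper)
    refine ⟨hne, fun u k hv => ?_⟩
    have hu : v.length ∣ u.length := by
      rw [← hper, ← isPeriodicPt_iff_minimalPeriod_dvd, isPeriodicPt_rotate_one, hv]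
      exact rotate_length_flatten_replicate u k
    have hlen : v.length = k * u.length := by simp [hv]
    have hpos : 0 < k * u.length := hlen ▸ List.length_pos_iff.2 hne
    have hle : k * u.length ≤ 1 * u.length := by
      rw [one_mul, ← hlen]
      exact Nat.le_of_dvd (Nat.pos_of_mul_pos_left hpos) hu
    exact le_antisymm (Nat.le_of_mul_le_mul_right hle (Nat.pos_of_mul_pos_left hpos))
      (Nat.pos_of_mul_pos_right hpos)

theorem isPrimitiveWord_rotate_one {v : List α} (hv : IsPrimitiveWord v) :
    IsPrimitiveWord (v.rotate 1) := by
  have hmem : v ∈ periodicPts fun l : List α => l.rotate 1 :=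
    ⟨v.length, List.length_pos_iff.2 hv.1, isPeriodicPt_rotate_one.2 v.rotate_length⟩
  rw [isPrimitiveWord_iff_minimalPeriod] at hv ⊢
  rw [List.length_rotate, ← hv]
  exact minimalPeriod_apply hmem

end PrimitiveWords

section PeriodicOrbit

variable {X Y : Type*} {f : X → X} {x y : X}

theorem map_toMultiset_periodicOrbit {g : Y → Y} {φ : X → Y} (hφ : Semiconj φ f g)
    (hper : minimalPeriod g (φ x) = minimalPeriod f x) :
    (periodicOrbit f x).toMultiset.map φ = (periodicOrbit g (φ x)).toMultiset := by
  simp only [periodicOrbit, Cycle.coe_toMultiset, Multiset.map_coe, List.map_map, hper]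
  exact congrArg _ (List.map_congr_left fun t _ => hφ.iterate_right t x)

theorem periodicOrbit_eq_of_mem (hx : x ∈ periodicPts f) (hy : y ∈ periodicOrbit f x) :
    periodicOrbit f y = periodicOrbit f x := by
  obtain ⟨t, rfl⟩ := (mem_periodicOrbit_iff hx).1 hy
  exact periodicOrbit_apply_iterate_eq hx t

end PeriodicOrbit

section OrbitMinima

variable {X : Type*} [Fintype X] [LinearOrder X] {f : X → X}

open scoped Classical in
/-- The least points of the orbits of `f`, one representative for each cycle when `f` is a
permutation. -/
noncomputable def orbitMinima (f : X → X) : Finset X :=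
  {x | ∀ y ∈ periodicOrbit f x, x ≤ y}

theorem mem_orbitMinima {x : X} : x ∈ orbitMinima f ↔ ∀ y ∈ periodicOrbit f x, x ≤ y := by
  simp only [orbitMinima, Finset.mem_filter, Finset.mem_univ, true_and]

theorem mem_orbitMinima_iff_iterate (hf : Injective f) {x : X} :
    x ∈ orbitMinima f ↔ ∀ t < Fintype.card X, x ≤ f^[t] x := by
  have hx := hf.mem_periodicPts x
  rw [mem_orbitMinima]
  refine ⟨fun h t _ => h _ (iterate_mem_periodicOrbit hx t), fun h y hy => ?_⟩
  obtain ⟨t, rfl⟩ := (mem_periodicOrbit_iff hx).1 hy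
  rw [← iterate_mod_minimalPeriod_eq]
  have hlt := Nat.mod_lt t (minimalPeriod_pos_of_mem_periodicPts hx)
  exact h _ (hlt.trans_le minimalPeriod_le_card)

theorem orbitMinima_injOn_periodicOrbit (hf : Injective f) :
    Set.InjOn (periodicOrbit f) (orbitMinima f) := by
  intro x hx y hy hxy
  refine le_antisymm (mem_orbitMinima.1 hx y ?_) (mem_orbitMinima.1 hy x ?_)
  · exact hxy ▸ self_mem_periodicOrbit (hf.mem_periodicPts y)
  · exact hxy ▸ self_mem_periodicOrbit (hf.mem_periodicPts x)

theorem exists_orbitMinima_mem_periodicOrbit (hf : Injective f) (x : X) :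
    ∃ y ∈ orbitMinima f, x ∈ periodicOrbit f y := by
  have hx := hf.mem_periodicPts x
  obtain ⟨y, hy, hmin⟩ := (Set.toFinite {y | y ∈ periodicOrbit f x}).exists_minimal
    ⟨x, self_mem_periodicOrbit hx⟩
  have hyx := periodicOrbit_eq_of_mem hx hy
  refine ⟨y, mem_orbitMinima.2 fun z hz => ?_, hyx ▸ self_mem_periodicOrbit hx⟩
  exact (le_total y z).elim id (hmin (hyx ▸ hz))

theorem univ_val_eq_bind_orbitMinima (hf : Injective f) :
    (Finset.univ : Finset X).val =
      (orbitMinima f).val.bind fun x => (periodicOrbit f x).toMultiset := by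
  refine (Multiset.Nodup.ext Finset.univ.nodup ?_).2 fun x => ?_
  · refine Multiset.nodup_bind.2
      ⟨fun x _ => nodup_periodicOrbit, (orbitMinima f).nodup.pairwise ?_⟩
    refine fun x hx y hy hxy => Multiset.disjoint_left.2 fun {z} hzx hzy => hxy ?_
    exact orbitMinima_injOn_periodicOrbit hf hx hy <|
      (periodicOrbit_eq_of_mem (hf.mem_periodicPts x) hzx).symm.trans
        (periodicOrbit_eq_of_mem (hf.mem_periodicPts y) hzy)
  · refine iff_of_true (Finset.mem_univ_val x) (Multiset.mem_bind.2 ?_)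
    exact exists_orbitMinima_mem_periodicOrbit hf x

end OrbitMinima

section Itinerary

variable {X Y : Type*} {ℓ : X → α} {f : X → X}

/-- The infinite word read along the forward orbit of `x` under `f`, the letter at a point being
its label under `ℓ`; itineraries are ordered lexicographically. -/
def itinerary (ℓ : X → α) (f : X → X) (x : X) : Lex (ℕ → α) :=
  toLex fun t => ℓ (f^[t] x)

theorem itinerary_apply (x : X) (t : ℕ) : itinerary ℓ f x t = ℓ (f^[t] x) :=
  rfl

theorem itinerary_iterate_apply (x : X) (s t : ℕ) :
    itinerary ℓ f (f^[s] x) t = itinerary ℓ f x (t + s) :=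
  congrArg ℓ (iterate_add_apply f t s x).symm

theorem itinerary_iterate_congr {x y : X}
    (h : itinerary ℓ f x = itinerary ℓ f y) (s : ℕ) :
    itinerary ℓ f (f^[s] x) = itinerary ℓ f (f^[s] y) :=
  funext fun t => by rw [itinerary_iterate_apply, h, itinerary_iterate_apply]

theorem itinerary_map {ℓ' : Y → α} {g : Y → Y} {φ : X → Y} (hφ : Semiconj φ f g)
    (hℓ : ∀ x, ℓ' (φ x) = ℓ x) (x : X) : itinerary ℓ' g (φ x) = itinerary ℓ f x :=
  funext fun t => (congrArg ℓ' (hφ.iterate_right t x).symm).trans (hℓ _)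

theorem itinerary_lt_iff [LinearOrder α] {x y : X} :
    itinerary ℓ f x < itinerary ℓ f y ↔
      ℓ x < ℓ y ∨ ℓ x = ℓ y ∧ itinerary ℓ f (f x) < itinerary ℓ f (f y) := by
  constructor
  · rintro ⟨t, heq, hlt⟩
    cases t with
    | zero => exact .inl hlt
    | succ t => exact .inr ⟨heq 0 t.succ_pos, t, fun s hs => heq (s + 1) (Nat.succ_lt_succ hs), hlt⟩
  · rintro (hlt | ⟨heq, t, hagree, hlt⟩)
    · exact ⟨0, fun s hs => absurd hs s.not_lt_zero, hlt⟩
    · refine ⟨t + 1, fun s hs => ?_, hlt⟩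
      cases s with
      | zero => exact heq
      | succ s => exact hagree s (Nat.lt_of_succ_lt_succ hs)

end Itinerary

section IsStandard

variable {X : Type*} [LinearOrder α] [LinearOrder X] {ℓ : X → α} {f : X → X}

/-- The order of `X` sorts the points by the label of their image under `f`, ties being broken by
the image itself. For the letters of a word `w` this property characterizes `f = st(w)⁻¹`. -/
def IsStandard (ℓ : X → α) (f : X → X) : Prop :=
  StrictMono fun x => toLex (ℓ (f x), f x)

theorem IsStandard.monotone_itinerary (h : IsStandard ℓ f) :
    Monotone fun x => itinerary ℓ f (f x) := by
  intro x y hxy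
  refine not_lt.1 ?_
  rintro ⟨t, hagree, hlt⟩
  induction t generalizing x y with
  | zero => exact hlt.not_ge (Prod.Lex.toLex_le_toLex'.1 (h.monotone hxy)).1
  | succ t ih =>
    have himage : f x ≤ f y :=
      (Prod.Lex.toLex_le_toLex'.1 (h.monotone hxy)).2 (hagree 0 t.succ_pos).symm
    exact ih himage (fun s hs => hagree (s + 1) (Nat.succ_lt_succ hs)) hlt

theorem IsStandard.iterate_lt_iterate (h : IsStandard ℓ f) {x y : X} (hxy : x < y)
    (heq : itinerary ℓ f x = itinerary ℓ f y) (t : ℕ) : f^[t] x < f^[t] y := by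
  induction t with
  | zero => exact hxy
  | succ t ih =>
    have hlabel : ℓ (f^[t + 1] x) = ℓ (f^[t + 1] y) := congrFun heq (t + 1)
    rw [iterate_succ_apply', iterate_succ_apply'] at hlabel ⊢
    exact (Prod.Lex.toLex_lt_toLex'.1 (h ih)).2 hlabel

theorem IsStandard.iterate_eq_self [Finite X] (h : IsStandard ℓ f) {x : X} {d : ℕ}
    (hd : itinerary ℓ f (f^[d] x) = itinerary ℓ f x) : f^[d] x = x := by
  -- A strictly increasing self-map of a finite chain is the identity.
  let S := {y // itinerary ℓ f y = itinerary ℓ f x}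
  let g : S → S := fun y => ⟨f^[d] y, (itinerary_iterate_congr y.2 d).trans hd⟩
  have hg : StrictMono g := fun y z hyz => h.iterate_lt_iterate hyz (y.2.trans z.2.symm) d
  exact congrArg Subtype.val (le_antisymm (hg.apply_le (x := ⟨x, rfl⟩)) hg.le_apply)

end IsStandard

section CycleWord

variable [LinearOrder α] (w : List α)

theorem tau_injective : Injective (tau w) := by
  have hnodup : (sortedPositions w).Nodup :=
    (List.perm_insertionSort _ _).nodup_iff.2 (List.nodup_finRange _)
  exact hnodup.injective_get.comp (Fin.cast_injective _)

theorem isStandard_tau : IsStandard w.get (tau w) := by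
  let key : Fin w.length → α ×ₗ ℕ := fun i => toLex (w.get i, (i : ℕ))
  have : Std.Total fun i j => key i ≤ key j := ⟨fun i j => le_total _ _⟩
  have : IsTrans _ fun i j => key i ≤ key j := ⟨fun _ _ _ => le_trans⟩
  have hsorted : (sortedPositions w).Pairwise fun i j => key i ≤ key j :=
    List.pairwise_insertionSort _ _
  intro i j hij
  have hle := Prod.Lex.toLex_le_toLex'.1 (List.pairwise_iff_get.1 hsorted
    (i.cast (length_sortedPositions w).symm) (j.cast (length_sortedPositions w).symm) hij)
  exact Prod.Lex.toLex_lt_toLex'.2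
    ⟨hle.1, fun heq => lt_of_le_of_ne (hle.2 heq) ((tau_injective w).ne hij.ne)⟩

variable {w}

theorem length_cycleWord (j : Fin w.length) :
    (cycleWord w j).length = minimalPeriod (tau w) j := by
  simp [cycleWord]

theorem cycleWord_iterate_tau (j : Fin w.length) (d : ℕ) :
    cycleWord w ((tau w)^[d] j) = (cycleWord w j).rotate d := by
  have hper := minimalPeriod_apply_iterate ((tau_injective w).mem_periodicPts j) d
  refine List.ext_getElem (by simp [length_cycleWord, hper]) fun t _ _ => ?_
  simp only [List.getElem_rotate, cycleWord, List.getElem_map, List.getElem_range, List.length_map,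
    List.length_range, iterate_mod_minimalPeriod_eq, iterate_add_apply]

theorem head?_cycleWord (j : Fin w.length) : (cycleWord w j).head? = some (w.get j) := by
  have hpos : 0 < minimalPeriod (tau w) j :=
    minimalPeriod_pos_of_mem_periodicPts ((tau_injective w).mem_periodicPts j)
  rw [cycleWord, List.head?_map, List.head?_range, if_neg hpos.ne']
  rfl

theorem itinerary_eq_of_cycleWord_eq {i j : Fin w.length} (h : cycleWord w i = cycleWord w j) :
    itinerary w.get (tau w) i = itinerary w.get (tau w) j := by
  refine funext fun t => Option.some_injective _ ?_
  rw [itinerary_apply, itinerary_apply, ← head?_cycleWord, ← head?_cycleWord,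
    cycleWord_iterate_tau, cycleWord_iterate_tau, h]

theorem isPrimitiveWord_cycleWord (j : Fin w.length) : IsPrimitiveWord (cycleWord w j) := by
  rw [isPrimitiveWord_iff_minimalPeriod, length_cycleWord, minimalPeriod_eq_minimalPeriod_iff]
  intro d
  rw [isPeriodicPt_rotate_one, ← cycleWord_iterate_tau]
  exact ⟨fun h => (isStandard_tau w).iterate_eq_self (itinerary_eq_of_cycleWord_eq h),
    fun h => congrArg (cycleWord w) h⟩

end CycleWord

/-- Primitive words, bundled so as to carry their own rotation dynamics and order. -/
@[ext]
structure PrimitiveWord (α : Type*) where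
  word : List α
  isPrimitive : IsPrimitiveWord word

namespace PrimitiveWord

/-- The first letter. -/
def head (u : PrimitiveWord α) : α :=
  u.word.head u.isPrimitive.1

/-- The cyclic shift by one letter. -/
def rotate (u : PrimitiveWord α) : PrimitiveWord α :=
  ⟨u.word.rotate 1, isPrimitiveWord_rotate_one u.isPrimitive⟩

theorem length_pos (u : PrimitiveWord α) : 0 < u.word.length :=
  List.length_pos_iff.2 u.isPrimitive.1

theorem word_iterate_rotate (u : PrimitiveWord α) (t : ℕ) :
    (rotate^[t] u).word = u.word.rotate t := by
  have hsemi : Semiconj word rotate fun l : List α => l.rotate 1 := fun _ => rfl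
  rw [hsemi.iterate_right t u, iterate_rotate_one]

theorem minimalPeriod_rotate (u : PrimitiveWord α) : minimalPeriod rotate u = u.word.length := by
  rw [← isPrimitiveWord_iff_minimalPeriod.1 u.isPrimitive, minimalPeriod_eq_minimalPeriod_iff]
  intro d
  rw [isPeriodicPt_rotate_one, ← word_iterate_rotate, IsPeriodicPt, IsFixedPt,
    PrimitiveWord.ext_iff]

theorem mem_periodicPts_rotate (u : PrimitiveWord α) : u ∈ periodicPts rotate :=
  minimalPeriod_pos_iff_mem_periodicPts.1 (u.minimalPeriod_rotate ▸ u.length_pos)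

theorem rotate_injective : Injective (rotate (α := α)) := fun _ _ h =>
  PrimitiveWord.ext (List.rotate_injective 1 (congrArg word h))

theorem rotate_surjective : Surjective (rotate (α := α)) := fun u => by
  obtain ⟨t, ht, hu⟩ := u.mem_periodicPts_rotate
  refine ⟨rotate^[t - 1] u, (iterate_succ_apply' rotate (t - 1) u).symm.trans ?_⟩
  rw [Nat.succ_eq_add_one, Nat.sub_add_cancel ht, hu]

theorem getElem?_word (u : PrimitiveWord α) {t : ℕ} (ht : t < u.word.length) :
    u.word[t]? = some (itinerary head rotate u t) := by
  rw [← List.head?_rotate ht, ← word_iterate_rotate]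
  exact List.head?_eq_some_head _

theorem eq_of_itinerary_eq_of_length_eq {u v : PrimitiveWord α}
    (h : itinerary head rotate u = itinerary head rotate v)
    (hlen : u.word.length = v.word.length) : u = v := by
  refine PrimitiveWord.ext (List.ext_getElem?' fun t ht => ?_)
  rw [hlen, max_self] at ht
  rw [getElem?_word u (hlen ▸ ht), getElem?_word v ht, h]

theorem length_dvd_of_itinerary_eq {u v : PrimitiveWord α}
    (h : itinerary head rotate u = itinerary head rotate v) :
    u.word.length ∣ v.word.length := by
  rw [← minimalPeriod_rotate u, ← isPeriodicPt_iff_minimalPeriod_dvd]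
  have hv : rotate^[v.word.length] v = v := v.minimalPeriod_rotate ▸ iterate_minimalPeriod
  refine eq_of_itinerary_eq_of_length_eq ?_ (by rw [word_iterate_rotate, List.length_rotate])
  rw [itinerary_iterate_congr h, hv, h]

theorem itinerary_injective : Injective (itinerary (head (α := α)) rotate) := fun _ _ h =>
  eq_of_itinerary_eq_of_length_eq h <|
    (length_dvd_of_itinerary_eq h).antisymm (length_dvd_of_itinerary_eq h.symm)

/-- Words are compared through the infinite periodic words they generate, read from the second
letter on: this is the order in which the cycles of `tau w` meet the positions of `w`. -/
noncomputable instance [LinearOrder α] : LinearOrder (PrimitiveWord α) :=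
  LinearOrder.lift' (fun u => itinerary head rotate u.rotate)
    (itinerary_injective.comp rotate_injective)

theorem isStandard_rotate [LinearOrder α] : IsStandard (head (α := α)) rotate := fun _ _ h =>
  Prod.Lex.toLex_lt_toLex.2 (itinerary_lt_iff.1 h)

end PrimitiveWord

open PrimitiveWord

theorem eq_of_monotone_of_map_univ_val_eq {n : ℕ} {β : Type*} [PartialOrder β] {f g : Fin n → β}
    (hf : Monotone f) (hg : Monotone g)
    (h : Finset.univ.val.map f = Finset.univ.val.map g) : f = g := by
  rw [Fin.univ_val_map, Fin.univ_val_map, Multiset.coe_eq_coe] at h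
  exact List.ofFn_injective (h.eq_of_sortedLE hf.sortedLE_ofFn hg.sortedLE_ofFn)

section Cycle

variable [LinearOrder α] {w : List α}

/-- `cycleWord`, with values in primitive words. -/
noncomputable def cycle (w : List α) (j : Fin w.length) : PrimitiveWord α :=
  ⟨cycleWord w j, isPrimitiveWord_cycleWord j⟩

theorem head_cycle (j : Fin w.length) : (cycle w j).head = w.get j :=
  List.head_eq_iff_head?_eq_some _ |>.2 (head?_cycleWord j)

theorem semiconj_cycle : Semiconj (cycle w) (tau w) rotate := fun j =>
  PrimitiveWord.ext (cycleWord_iterate_tau j 1)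

theorem monotone_cycle : Monotone (cycle w) := fun i j hij => by
  have hle := (isStandard_tau w).monotone_itinerary hij
  simp only [← itinerary_map semiconj_cycle head_cycle, semiconj_cycle.eq] at hle
  exact hle

theorem semiconj_of_map_rotate_eq {u : Fin w.length → PrimitiveWord α} (hu : Monotone u)
    (hhead : ∀ j, (u j).head = w.get j)
    (hrot : (Finset.univ.val.map u).map rotate = Finset.univ.val.map u) :
    Semiconj u (tau w) rotate := by
  -- `u ∘ tau w` and `rotate ∘ u` list the same multiset, both in increasing order of `key`.
  let key : PrimitiveWord α → α ×ₗ PrimitiveWord α := fun v => toLex (v.head, v)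
  have htau : Monotone (key ∘ u ∘ tau w) := fun i j hij => by
    have hle := Prod.Lex.toLex_le_toLex'.1 ((isStandard_tau w).monotone hij)
    simp only [← hhead] at hle
    exact Prod.Lex.toLex_le_toLex'.2 ⟨hle.1, fun heq => hu (hle.2 heq)⟩
  have hrotate : Monotone (key ∘ rotate ∘ u) := isStandard_rotate.monotone.comp hu
  have hperm : Finset.univ.val.map (tau w) = Finset.univ.val :=
    Multiset.map_univ_val_equiv <|
      Equiv.ofBijective _ (Finite.injective_iff_bijective.1 (tau_injective w))
  have hkey : key ∘ u ∘ tau w = key ∘ rotate ∘ u := by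
    refine eq_of_monotone_of_map_univ_val_eq htau hrotate ?_
    rw [← Multiset.map_map, ← Multiset.map_map, ← Multiset.map_map, ← Multiset.map_map, hperm, hrot]
  exact fun j => congrArg (fun z => (ofLex z).2) (congrFun hkey j)

theorem eq_cycle_of_map_rotate_eq {u : Fin w.length → PrimitiveWord α} (hu : Monotone u)
    (hhead : ∀ j, (u j).head = w.get j)
    (hrot : (Finset.univ.val.map u).map rotate = Finset.univ.val.map u) : u = cycle w :=
  funext fun j => itinerary_injective <|
    (itinerary_map (semiconj_of_map_rotate_eq hu hhead hrot) hhead j).trans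
      (itinerary_map semiconj_cycle head_cycle j).symm

end Cycle

section Readings

/-- The necklace represented by a primitive word. -/
def PrimitiveWord.necklace (u : PrimitiveWord α) : Necklace α :=
  Necklace.mk u.word

theorem PrimitiveWord.necklace_eq_iff {u v : PrimitiveWord α} :
    u.necklace = v.necklace ↔ ∃ t, rotate^[t] u = v := by
  simp only [PrimitiveWord.ext_iff, word_iterate_rotate]
  exact Quotient.eq (r := List.IsRotated.setoid α)

theorem PrimitiveWord.necklace_rotate (u : PrimitiveWord α) : u.rotate.necklace = u.necklace :=
  (necklace_eq_iff.2 ⟨1, rfl⟩).symm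

theorem isPrimitive_iff_exists_necklace_eq {x : Necklace α} :
    x.IsPrimitive ↔ ∃ u : PrimitiveWord α, u.necklace = x :=
  ⟨fun ⟨v, hx, hv⟩ => ⟨⟨v, hv⟩, hx⟩, fun ⟨u, hx⟩ => ⟨u.word, hx, u.isPrimitive⟩⟩

theorem finite_setOf_necklace_eq (x : Necklace α) :
    {u : PrimitiveWord α | u.necklace = x}.Finite := by
  obtain ⟨v, rfl⟩ := Quotient.exists_rep x
  refine (List.finite_toSet v.cyclicPermutations).preimage
    (fun _ _ _ _ => PrimitiveWord.ext) |>.subset fun u hu => ?_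
  exact List.mem_cyclicPermutations_iff.2 (Quotient.exact hu)

/-- The primitive words representing a necklace. -/
noncomputable def primitiveWords (x : Necklace α) : Finset (PrimitiveWord α) :=
  (finite_setOf_necklace_eq x).toFinset

theorem mem_primitiveWords {x : Necklace α} {u : PrimitiveWord α} :
    u ∈ primitiveWords x ↔ u.necklace = x :=
  (finite_setOf_necklace_eq x).mem_toFinset

theorem primitiveWords_necklace_val (u : PrimitiveWord α) :
    (primitiveWords u.necklace).val = (periodicOrbit rotate u).toMultiset := by
  have hnodup : (periodicOrbit rotate u).toMultiset.Nodup := nodup_periodicOrbit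
  refine (Multiset.Nodup.ext (Finset.nodup _) hnodup).2 fun v => ?_
  rw [Finset.mem_val, mem_primitiveWords, eq_comm, necklace_eq_iff]
  exact (mem_periodicOrbit_iff u.mem_periodicPts_rotate).symm

theorem card_primitiveWords {x : Necklace α} (hx : x.IsPrimitive) :
    (primitiveWords x).card = x.length := by
  obtain ⟨u, rfl⟩ := isPrimitive_iff_exists_necklace_eq.1 hx
  rw [Finset.card_def, primitiveWords_necklace_val, Cycle.card_toMultiset, periodicOrbit_length,
    minimalPeriod_rotate]
  rfl

/-- The primitive words representing the members of a multiset of necklaces, with multiplicity.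
On primitive necklaces this loses no information and turns multisets of necklaces into
rotation-invariant multisets of words. -/
noncomputable def readings (M : Multiset (Necklace α)) : Multiset (PrimitiveWord α) :=
  M.bind fun x => (primitiveWords x).val

theorem card_readings {M : Multiset (Necklace α)} (hM : ∀ x ∈ M, x.IsPrimitive) :
    (readings M).card = (M.map Necklace.length).sum := by
  rw [readings, Multiset.card_bind]
  exact congrArg _ (Multiset.map_congr rfl fun x hx => card_primitiveWords (hM x hx))

open scoped Classical in
theorem count_readings (M : Multiset (Necklace α)) (u : PrimitiveWord α) :
    (readings M).count u = M.count u.necklace := by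
  have hx (x : Necklace α) : (primitiveWords x).val.count u = if u.necklace = x then 1 else 0 := by
    rw [Multiset.count_eq_of_nodup (Finset.nodup _)]
    simp only [Finset.mem_val, mem_primitiveWords]
  induction M using Multiset.induction with
  | empty => rfl
  | cons x M ih =>
    rw [readings, Multiset.cons_bind, Multiset.count_add, hx, Multiset.count_cons, ← ih, add_comm]
    rfl

theorem map_rotate_readings (M : Multiset (Necklace α)) :
    (readings M).map rotate = readings M := by
  classical
  refine Multiset.ext.2 fun v => ?_
  obtain ⟨u, rfl⟩ := rotate_surjective v
  rw [Multiset.count_map_eq_count' _ _ rotate_injective, count_readings, count_readings,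
    necklace_rotate]

theorem readings_injOn :
    Set.InjOn readings {M : Multiset (Necklace α) | ∀ x ∈ M, x.IsPrimitive} := by
  classical
  intro M hM N hN h
  refine Multiset.ext.2 fun x => ?_
  by_cases hx : x.IsPrimitive
  · obtain ⟨u, rfl⟩ := isPrimitive_iff_exists_necklace_eq.1 hx
    rw [← count_readings, h, count_readings]
  · rw [Multiset.count_eq_zero_of_notMem (mt (hM x) hx),
      Multiset.count_eq_zero_of_notMem (mt (hN x) hx)]

end Readings

section Phi

variable [LinearOrder α]

theorem Phi_eq_map_orbitMinima (w : List α) :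
    Phi w = (orbitMinima (tau w)).val.map fun j => (cycle w j).necklace := by
  refine congrArg (fun s : Finset (Fin w.length) => s.val.map fun j => (cycle w j).necklace) ?_
  ext j
  simp [mem_orbitMinima_iff_iterate (tau_injective w)]

theorem isPrimitive_of_mem_Phi {w : List α} {x : Necklace α} (hx : x ∈ Phi w) :
    x.IsPrimitive := by
  obtain ⟨j, _, rfl⟩ := Multiset.mem_map.1 hx
  exact ⟨_, rfl, isPrimitiveWord_cycleWord j⟩

theorem map_cycle_periodicOrbit {w : List α} (j : Fin w.length) :
    (periodicOrbit (tau w) j).toMultiset.map (cycle w) =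
      (primitiveWords (cycle w j).necklace).val := by
  rw [primitiveWords_necklace_val]
  exact map_toMultiset_periodicOrbit semiconj_cycle
    ((minimalPeriod_rotate _).trans (length_cycleWord j))

theorem readings_Phi (w : List α) : readings (Phi w) = Finset.univ.val.map (cycle w) := by
  rw [univ_val_eq_bind_orbitMinima (tau_injective w), Multiset.map_bind, readings,
    Phi_eq_map_orbitMinima, Multiset.bind_map]
  exact Multiset.bind_congr fun j _ => (map_cycle_periodicOrbit j).symm

theorem sum_length_Phi (w : List α) : ((Phi w).map Necklace.length).sum = w.length := by
  rw [← card_readings fun _ => isPrimitive_of_mem_Phi, readings_Phi, Multiset.card_map,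
    Finset.card_val, Finset.card_fin]

/-- The inverse of `Phi`: the first letters of the readings of `M`, in increasing order of the
readings. -/
noncomputable def invPhi (M : Multiset (Necklace α)) : List α :=
  (readings M).sort.map head

theorem invPhi_Phi (w : List α) : invPhi (Phi w) = w := by
  have hsort : (readings (Phi w)).sort = List.ofFn (cycle w) := by
    rw [readings_Phi, Fin.univ_val_map, Multiset.coe_sort]
    exact List.mergeSort_eq_self _ monotone_cycle.sortedLE_ofFn.pairwise
  rw [invPhi, hsort, List.map_ofFn]
  exact (congrArg List.ofFn (funext head_cycle)).trans (List.ofFn_get w)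

theorem map_cycle_invPhi (M : Multiset (Necklace α)) :
    Finset.univ.val.map (cycle (invPhi M)) = readings M := by
  have hlen : (invPhi M).length = (readings M).sort.length := List.length_map _
  let u : Fin (invPhi M).length → PrimitiveWord α := fun j => (readings M).sort.get (j.cast hlen)
  have hu : Monotone u := fun i j hij =>
    ((readings M).pairwise_sort (· ≤ ·)).sortedLE.monotone_get hij
  have hhead (j) : (u j).head = (invPhi M).get j := (List.getElem_map _).symm
  have hread : Finset.univ.val.map u = readings M := by
    have hofFn : List.ofFn u = (readings M).sort :=
      (List.ofFn_congr hlen _).trans (List.ofFn_get _)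
    rw [Fin.univ_val_map, hofFn, Multiset.sort_eq]
  rw [← eq_cycle_of_map_rotate_eq hu hhead (by rw [hread, map_rotate_readings]), hread]

theorem Phi_invPhi {M : Multiset (Necklace α)} (hM : ∀ x ∈ M, x.IsPrimitive) :
    Phi (invPhi M) = M :=
  readings_injOn (fun _ => isPrimitive_of_mem_Phi) hM ((readings_Phi _).trans (map_cycle_invPhi M))

end Phi

end GesselReutenauer

open GesselReutenauer

theorem stmt12 (α : Type*) [LinearOrder α] (n : ℕ) :
    (∀ w : List α, w.length = n →
        ((Phi w).map Necklace.length).sum = n ∧ ∀ x ∈ Phi w, x.IsPrimitive) ∧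
    (∀ w w' : List α, w.length = n → w'.length = n → Phi w = Phi w' → w = w') ∧
    (∀ M : Multiset (Necklace α), (M.map Necklace.length).sum = n →
        (∀ x ∈ M, x.IsPrimitive) → ∃ w : List α, w.length = n ∧ Phi w = M) := by
  refine ⟨?_, ?_, ?_⟩
  · rintro w rfl
    exact ⟨sum_length_Phi w, fun _ => isPrimitive_of_mem_Phi⟩
  · intro w w' _ _ h
    rw [← invPhi_Phi w, h, invPhi_Phi]
  · rintro M rfl hM
    exact ⟨invPhi M, by rw [← sum_length_Phi, Phi_invPhi hM], Phi_invPhi hM⟩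
end
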